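/- Let η : ℝ³ → ℝ³ be a C² map whose Jacobian ∇η(x) (entries ∂_l η_i) is invertible at every x, let A := (∇η)⁻¹, and define ∂_i^η g := ∑_k A_{ki} ∂_k g. Then for every C² function f : ℝ³ → ℝ and all indices i, j ∈ {1,2,3}, the transformed derivatives commute: ∂_j^η(∂_i^η f) = ∂_i^η(∂_j^η f) at every point. -/

import Mathlib

open scoped Matrix BigOperators

/-- Partial derivative `∂_l f` of a scalar function on `ℝ³`. -/
noncomputable def pd (f : (Fin 3 → ℝ) → ℝ) (l : Fin 3) (x : Fin 3 → ℝ) : ℝ :=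
  fderiv ℝ f x (Pi.single l 1)

/-- Jacobian matrix `∇η` with entries `(∇η)_{il} = ∂_l η_i`. -/
noncomputable def Jac (η : (Fin 3 → ℝ) → Fin 3 → ℝ) (x : Fin 3 → ℝ) :
    Matrix (Fin 3) (Fin 3) ℝ :=
  Matrix.of fun i l => pd (fun y => η y i) l x

/-- Transformed derivative `∂_i^η g = ∑_k A_{ki} ∂_k g`, where `A = (∇η)⁻¹`. -/
noncomputable def Deta (η : (Fin 3 → ℝ) → Fin 3 → ℝ) (f : (Fin 3 → ℝ) → ℝ)
    (i : Fin 3) (x : Fin 3 → ℝ) : ℝ :=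
  ∑ k, (Jac η x)⁻¹ k i * pd f k x

theorem pd_diff {f : (Fin 3 → ℝ) → ℝ} (hf : ContDiff ℝ 2 f) (l : Fin 3) :
    Differentiable ℝ (pd f l) := by
  have h : ContDiff ℝ 1 (fderiv ℝ f) := hf.fderiv_right (by norm_num)
  have h2 : Differentiable ℝ (fderiv ℝ f) := h.differentiable (by norm_num)
  intro x
  exact (h2 x).clm_apply (differentiableAt_const _)

theorem pd_symm {f : (Fin 3 → ℝ) → ℝ} (hf : ContDiff ℝ 2 f) (l m : Fin 3) (x : Fin 3 → ℝ) :
    pd (pd f l) m x = pd (pd f m) l x := by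
  have h : ContDiff ℝ 1 (fderiv ℝ f) := hf.fderiv_right (by norm_num)
  have h2 : Differentiable ℝ (fderiv ℝ f) := h.differentiable (by norm_num)
  have key : ∀ a b : Fin 3, pd (pd f a) b x
      = fderiv ℝ (fderiv ℝ f) x (Pi.single b 1) (Pi.single a 1) := by
    intro a b
    have := (h2 x).hasFDerivAt.clm_apply (hasFDerivAt_const (Pi.single a (1:ℝ) : Fin 3 → ℝ) x)
    have e : fderiv ℝ (pd f a) x = _ := this.fderiv
    rw [pd, e]
    simp
  rw [key, key]
  exact (hf.contDiffAt.isSymmSndFDerivAt (by simp)) _ _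

theorem inv_diff {M : (Fin 3 → ℝ) → Matrix (Fin 3) (Fin 3) ℝ}
    (hM : ∀ i j, Differentiable ℝ (fun x => M x i j)) (hinv : ∀ x, IsUnit (M x))
    (a b : Fin 3) : Differentiable ℝ (fun x => (M x)⁻¹ a b) := by
  have hdet : Differentiable ℝ (fun x => (M x).det) := by
    simp only [Matrix.det_fin_three]
    fun_prop
  have hadj : Differentiable ℝ (fun x => (M x).adjugate a b) := by
    simp only [Matrix.adjugate_fin_three]
    fin_cases a <;> fin_cases b <;> simp <;> fun_prop
  have h0 : ∀ x, (M x).det ≠ 0 := fun x =>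
    ((Matrix.isUnit_iff_isUnit_det _).1 (hinv x)).ne_zero
  simp only [Matrix.inv_def, Ring.inverse_eq_inv', Matrix.smul_apply, smul_eq_mul]
  exact (hdet.inv h0).mul hadj

/-- Third commutator identity of Lemma 2.1: the transformed derivatives commute,
`∂_j^η ∂_i^η f = ∂_i^η ∂_j^η f`. -/
theorem Deta_comm
    (η : (Fin 3 → ℝ) → Fin 3 → ℝ) (hη : ContDiff ℝ 2 η)
    (hinv : ∀ x, IsUnit (Jac η x))
    (f : (Fin 3 → ℝ) → ℝ) (hf : ContDiff ℝ 2 f)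
    (i j : Fin 3) (x : Fin 3 → ℝ) :
    Deta η (fun y => Deta η f i y) j x = Deta η (fun y => Deta η f j y) i x := by
  have hηi : ∀ i, ContDiff ℝ 2 (fun y => η y i) := fun i => contDiff_pi.1 hη i
  have hJ : ∀ a b, Differentiable ℝ (fun x => Jac η x a b) := fun a b => pd_diff (hηi a) b
  have hg : ∀ i, Differentiable ℝ (fun y => Deta η f i y) := by
    intro i
    unfold Deta
    exact Differentiable.fun_sum fun k _ => (inv_diff hJ hinv k i).mul (pd_diff hf k)
  have hu : ∀ y, IsUnit (Jac η y).det := fun y => (Matrix.isUnit_iff_isUnit_det _).1 (hinv y)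
  have h1 : ∀ l, pd f l = fun y => ∑ a, Jac η y a l * Deta η f a y := by
    intro l
    funext y
    have e : (fun a => Deta η f a y) = (fun k => pd f k y) ᵥ* (Jac η y)⁻¹ := by
      funext a
      simp [Deta, Matrix.vecMul, dotProduct, mul_comm]
    have e2 : (fun a => Deta η f a y) ᵥ* Jac η y = fun k => pd f k y := by
      rw [e, Matrix.vecMul_vecMul, Matrix.nonsing_inv_mul _ (hu y), Matrix.vecMul_one]
    have := congrFun e2 l
    simp only [Matrix.vecMul, dotProduct] at this
    rw [← this]
    exact Finset.sum_congr rfl fun _ _ => mul_comm _ _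
  have h2 : ∀ l m, pd (pd f l) m x = ∑ a, (pd (pd (fun y => η y a) l) m x * Deta η f a x
      + Jac η x a l * pd (fun y => Deta η f a y) m x) := by
    intro l m
    have hd := HasFDerivAt.fun_sum (u := Finset.univ) fun a (_ : a ∈ Finset.univ) =>
      (hJ a l x).hasFDerivAt.mul (hg a x).hasFDerivAt
    rw [h1 l, pd]
    erw [hd.fderiv]
    simp only [ContinuousLinearMap.sum_apply, ContinuousLinearMap.add_apply,
      ContinuousLinearMap.smul_apply, smul_eq_mul]
    refine Finset.sum_congr rfl fun a _ => ?_
    rw [add_comm, mul_comm (Deta η f a x)]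
    rfl
  let G : Matrix (Fin 3) (Fin 3) ℝ := Matrix.of fun a m => pd (fun y => Deta η f a y) m x
  have h3 : (Jac η x)ᵀ * G = Gᵀ * Jac η x := by
    ext l m
    have e := pd_symm hf l m x
    rw [h2, h2, Finset.sum_add_distrib, Finset.sum_add_distrib] at e
    simp only [fun a => pd_symm (hηi a) l m x] at e
    have e' := add_left_cancel e
    simp only [Matrix.mul_apply, Matrix.transpose_apply]
    refine e'.trans (Finset.sum_congr rfl fun _ _ => mul_comm _ _)
  have h4 : G * (Jac η x)⁻¹ = ((Jac η x)⁻¹)ᵀ * Gᵀ := by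
    have t : ((Jac η x)⁻¹)ᵀ * (Jac η x)ᵀ = 1 := by
      rw [← Matrix.transpose_mul, Matrix.mul_nonsing_inv _ (hu x), Matrix.transpose_one]
    calc G * (Jac η x)⁻¹ = ((Jac η x)⁻¹)ᵀ * ((Jac η x)ᵀ * G) * (Jac η x)⁻¹ := by
          rw [← Matrix.mul_assoc, t, Matrix.one_mul]
      _ = _ := by
          rw [h3, Matrix.mul_assoc, Matrix.mul_assoc, Matrix.mul_nonsing_inv _ (hu x),
            Matrix.mul_one]
  have h5 : ∀ a b, Deta η (fun y => Deta η f a y) b x = (G * (Jac η x)⁻¹) a b := by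
    intro a b
    simp only [Matrix.mul_apply]
    exact Finset.sum_congr rfl fun _ _ => mul_comm _ _
  rw [h5, h5, ← Matrix.transpose_apply (G * (Jac η x)⁻¹) i j, Matrix.transpose_mul, ← h4]
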